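/- Let Φ, Ψ be Orlicz functions, φ = {φ_n}_{n≥1}, w = {w_n}_{n≥1} positive nondecreasing weight sequences satisfying the Δ₂-condition with constants C_φ, C_w, and ψ = {ψ_n}_{n≥0}, ϱ = {ϱ_n}_{n≥0} positive nondecreasing weight sequences satisfying the Δ₂-condition with constants C_ψ, C_ϱ. For f ∈ L¹(𝕋) with Fourier coefficients {f_n}, define ‖f‖_W = Σ_{k∈ℤ}|f_k|, ‖f‖₋ = the Luxemburg norm of {f_{−k}}_{k≥1} in ℓ^Φ_{φ,w}, ‖f‖₊ = the Luxemburg norm of {f_k}_{k≥0} in ℓ^Ψ_{ψ,ϱ}, and ‖f‖ = ‖f‖_W + ‖f‖₋ + ‖f‖₊. Then for all f, g with ‖f‖, ‖g‖ < ∞, one has ‖fg‖ ≤ C·‖f‖·‖g‖ with C = 1 + 2(1+C_w)·C_φ + 2(1+C_ϱ)·C_ψ. -/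

import Mathlib

open scoped ENNReal
open Filter MeasureTheory

instance fact_two_pi_pos : Fact (0 < 2 * Real.pi) := ⟨Real.two_pi_pos⟩

/-- The set of admissible `λ` in the Luxemburg norm of the sequence `c`
in the two-weighted Orlicz sequence space with Orlicz function `Φ` and
weights `v, u` (already aligned with the index set `ℕ`). -/
def luxSet (Φ : ℝ → ℝ) (v u : ℕ → ℝ) (c : ℕ → ℂ) : Set ℝ :=
  {lam : ℝ | 0 < lam ∧
    (∑' n : ℕ, ENNReal.ofReal (Φ (‖c n‖ * v n / lam)) * ENNReal.ofReal (u n)) ≤ 1}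

/-- The Luxemburg norm. -/
noncomputable def lux (Φ : ℝ → ℝ) (v u : ℕ → ℝ) (c : ℕ → ℂ) : ℝ :=
  sInf (luxSet Φ v u c)

/-!
An integrable function with summable Fourier coefficients is almost everywhere the sum of its
Fourier series, so the coefficients of `f * g` are the convolution of those of `f` and `g`. In
`n = j + (n - j)` one of the two terms lies on the same side of `0` as `n` and at least half as far
out, so the `Δ₂`-condition moves the weights from `n` to that term. The convolution thereby splits
into two kernel operators, with kernels `‖f_{n-m}‖` and `‖g_{n-m}‖` whose row and column sums are at
most the `ℓ¹` norms. Jensen's inequality in each row and Tonelli in the columns, as in Schur's test,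
bound such an operator in the Luxemburg norm. This gives the constant `max (Cφ * Cw) (Cψ * Cϱ)`.
-/

section FourierCoefficients

open AddCircle BoundedContinuousFunction
open scoped NNReal

/-- The functional `p ↦ ∫ p • h ∂μ` on continuous functions, for an integrable `h`. The Fourier
coefficients of `h` are its values at the monomials. -/
noncomputable def integralSMulCLM {X E : Type*} [TopologicalSpace X] [CompactSpace X]
    [MeasurableSpace X] [OpensMeasurableSpace X] {μ : Measure X} [NormedAddCommGroup E]
    [NormedSpace ℂ E] (h : X → E) (hh : Integrable h μ) : C(X, ℂ) →L[ℂ] E :=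
  have integrable_smul (p : C(X, ℂ)) : Integrable (fun x => p x • h x) μ :=
    hh.bdd_smul ‖p‖ p.continuous.aestronglyMeasurable (ae_of_all _ p.norm_coe_le_norm)
  LinearMap.mkContinuous
    { toFun := fun p => ∫ x, p x • h x ∂μ
      map_add' := fun p q => by
        simp only [ContinuousMap.add_apply, add_smul]
        exact integral_add (integrable_smul p) (integrable_smul q)
      map_smul' := fun c p => by
        simp only [ContinuousMap.smul_apply, smul_assoc]
        exact integral_smul c _ }
    (∫ x, ‖h x‖ ∂μ) fun p =>
      calc ‖∫ x, p x • h x ∂μ‖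
          ≤ ∫ x, ‖p x • h x‖ ∂μ := norm_integral_le_integral_norm _
        _ ≤ ∫ x, ‖h x‖ * ‖p‖ ∂μ := by
            refine integral_mono (integrable_smul p).norm (hh.norm.mul_const _) fun x => ?_
            simp only [norm_smul, mul_comm ‖h x‖]
            gcongr
            exact p.norm_coe_le_norm x
        _ = (∫ x, ‖h x‖ ∂μ) * ‖p‖ := integral_mul_const _ _

theorem ae_eq_zero_of_forall_integral_boundedContinuousFunction_smul_eq_zero {X E : Type*}
    [TopologicalSpace X] [HasOuterApproxClosed X] [MeasurableSpace X] [BorelSpace X]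
    {μ : Measure X} [NormedAddCommGroup E] [NormedSpace ℝ E] [CompleteSpace E] {h : X → E}
    (hh : Integrable h μ) (h0 : ∀ p : X →ᵇ ℝ≥0, ∫ x, (p x : ℝ) • h x ∂μ = 0) : h =ᵐ[μ] 0 := by
  refine ae_eq_zero_of_forall_setIntegral_isClosed_eq_zero hh fun F hF => ?_
  have tendsto_indicator (x : X) :
      Tendsto (fun n => (hF.apprSeq n x : ℝ) • h x) atTop (nhds (F.indicator h x)) := by
    have tendsto_apprSeq := tendsto_pi_nhds.1 (HasOuterApproxClosed.tendsto_apprSeq hF) x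
    convert! (NNReal.tendsto_coe.2 tendsto_apprSeq).smul_const (h x) using 2
    by_cases hx : x ∈ F <;> simp [hx]
  have norm_le (n : ℕ) (x : X) : ‖(hF.apprSeq n x : ℝ) • h x‖ ≤ ‖h x‖ := by
    rw [norm_smul, NNReal.norm_eq]
    exact mul_le_of_le_one_left (norm_nonneg _)
      (mod_cast HasOuterApproxClosed.apprSeq_apply_le_one hF n x)
  have tendsto_integral : Tendsto (fun n => ∫ x, (hF.apprSeq n x : ℝ) • h x ∂μ) atTop
      (nhds (∫ x, F.indicator h x ∂μ)) :=
    tendsto_integral_of_dominated_convergence (fun x => ‖h x‖)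
      (fun n => (NNReal.continuous_coe.comp (hF.apprSeq n).continuous).aestronglyMeasurable.smul
        hh.1)
      hh.norm (fun n => ae_of_all _ (norm_le n)) (ae_of_all _ tendsto_indicator)
  simp only [h0, integral_indicator hF.measurableSet] at tendsto_integral
  exact tendsto_nhds_unique tendsto_integral tendsto_const_nhds

variable {T : ℝ} [Fact (0 < T)] {E : Type*} [NormedAddCommGroup E] [NormedSpace ℂ E]

theorem ae_eq_zero_of_fourierCoeff_eq_zero [CompleteSpace E] {h : AddCircle T → E}
    (hh : Integrable h haarAddCircle) (h0 : ∀ n, fourierCoeff h n = 0) :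
    h =ᵐ[haarAddCircle] 0 := by
  have integralSMulCLM_eq_zero : integralSMulCLM h hh = 0 := by
    refine ContinuousLinearMap.ext_on (s := Set.range (@fourier T)) ?_ ?_
    · exact (Submodule.dense_iff_topologicalClosure_eq_top).2 span_fourier_closure_eq_top
    · rintro _ ⟨n, rfl⟩
      have coeff_eq_zero := h0 (-n)
      rw [fourierCoeff, neg_neg] at coeff_eq_zero
      exact coeff_eq_zero
  refine ae_eq_zero_of_forall_integral_boundedContinuousFunction_smul_eq_zero hh fun p => ?_
  exact DFunLike.congr_fun integralSMulCLM_eq_zero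
    ⟨fun x => ((p x : ℝ) : ℂ), by fun_prop⟩

theorem hasSum_fourierCoeff_smul {c : ℤ → ℂ} {F : C(AddCircle T, ℂ)}
    (hF : HasSum (fun k => c k • fourier k) F) {h : AddCircle T → E}
    (hh : Integrable h haarAddCircle) (n : ℤ) :
    HasSum (fun k => c k • fourierCoeff h (n - k)) (fourierCoeff (⇑F • h) n) := by
  convert! (hF.mul_left (fourier (-n))).mapL (integralSMulCLM h hh) using 1
  · ext k
    have fourier_mul : (fourier (-n) * c k • fourier k : C(AddCircle T, ℂ)) =
        c k • fourier (-(n - k)) := by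
      ext t
      simp only [ContinuousMap.mul_apply, ContinuousMap.smul_apply, smul_eq_mul,
        show -(n - k) = -n + k by ring, fourier_add]
      ring
    rw [fourier_mul, map_smul]
    rfl
  · simp only [fourierCoeff, Pi.smul_apply', ← smul_assoc]
    rfl

theorem fourierCoeff_of_hasSum {c : ℤ → ℂ} {F : C(AddCircle T, ℂ)}
    (hF : HasSum (fun k => c k • fourier k) F) : fourierCoeff F = c := by
  ext n
  have integrable_one : Integrable (1 : AddCircle T → ℂ) haarAddCircle := integrable_const 1
  have fourierCoeff_one : fourierCoeff (1 : AddCircle T → ℂ) = Pi.single 0 1 := by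
    rw [← fourierCoeff_fourier (T := T) 0]
    congr 1
    ext t
    exact fourier_zero.symm
  have hasSum_coeff := hasSum_fourierCoeff_smul hF integrable_one n
  rw [fourierCoeff_one, smul_eq_mul, mul_one] at hasSum_coeff
  have hasSum_delta : HasSum (fun k => c k • (Pi.single 0 1 : ℤ → ℂ) (n - k)) (c n) := by
    simpa using hasSum_single (f := fun k => c k • (Pi.single 0 1 : ℤ → ℂ) (n - k)) n
      fun k hk => by rw [Pi.single_eq_of_ne (sub_ne_zero.2 hk.symm), smul_zero]
  exact hasSum_coeff.unique hasSum_delta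

theorem ae_eq_of_hasSum_fourierCoeff {f : AddCircle T → ℂ} (hf : Integrable f haarAddCircle)
    {F : C(AddCircle T, ℂ)} (hF : HasSum (fun k => fourierCoeff f k • fourier k) F) :
    f =ᵐ[haarAddCircle] F := by
  have hFint : Integrable F haarAddCircle :=
    F.continuous.integrable_of_hasCompactSupport (.of_compactSpace _)
  rw [← sub_ae_eq_zero]
  refine ae_eq_zero_of_fourierCoeff_eq_zero (hf.sub hFint) fun n => ?_
  rw [sub_eq_add_neg, ← neg_one_smul ℂ (F : AddCircle T → ℂ), fourierCoeff.add hf (hFint.smul _),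
    Pi.add_apply, fourierCoeff.const_smul, fourierCoeff_of_hasSum hF, neg_one_smul, add_neg_cancel]

theorem fourierCoeff_smul_of_summable {f : AddCircle T → ℂ} {h : AddCircle T → E}
    (hf : Integrable f haarAddCircle) (hh : Integrable h haarAddCircle)
    (hfW : Summable fun k => ‖fourierCoeff f k‖) (n : ℤ) :
    fourierCoeff (f • h) n = ∑' k, fourierCoeff f k • fourierCoeff h (n - k) := by
  have summable_series : Summable fun k => fourierCoeff f k • (fourier k : C(AddCircle T, ℂ)) :=
    .of_norm (by simpa only [norm_smul, fourier_norm, mul_one] using hfW)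
  have hae := ae_eq_of_hasSum_fourierCoeff hf summable_series.hasSum
  have fourierCoeff_eq : fourierCoeff (f • h) = fourierCoeff (⇑(∑' k, fourierCoeff f k • fourier k :
      C(AddCircle T, ℂ)) • h) := fourierCoeff_congr_ae (hae.smul (.refl _ h))
  rw [fourierCoeff_eq]
  exact (hasSum_fourierCoeff_smul summable_series.hasSum hh n).tsum_eq.symm

end FourierCoefficients

section YoungFunctions

open scoped NNReal

/-- A convex nondecreasing function on `[0, ∞)` vanishing at `0`. An Orlicz function is one that
moreover tends to infinity; continuity on `(0, ∞)` is a consequence of convexity. -/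
structure IsYoungFunction (Φ : ℝ → ℝ) : Prop where
  monotoneOn : MonotoneOn Φ (Set.Ici 0)
  convexOn : ConvexOn ℝ (Set.Ici 0) Φ
  map_zero : Φ 0 = 0

namespace IsYoungFunction

variable {Φ : ℝ → ℝ} {α β : Type*}

theorem nonneg (hΦ : IsYoungFunction Φ) {x : ℝ} (hx : 0 ≤ x) : 0 ≤ Φ x :=
  hΦ.map_zero.symm.trans_le (hΦ.monotoneOn Set.self_mem_Ici hx hx)

theorem continuousAt (hΦ : IsYoungFunction Φ) {x : ℝ} (hx : 0 < x) : ContinuousAt Φ x :=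
  ((hΦ.convexOn.subset Set.Ioi_subset_Ici_self (convex_Ioi 0)).continuousOn isOpen_Ioi).continuousAt
    (Ioi_mem_nhds hx)

theorem map_sum_mul_le (hΦ : IsYoungFunction Φ) {s : Finset α} {p x : α → ℝ}
    (hp : ∀ i ∈ s, 0 ≤ p i) (hs : ∑ i ∈ s, p i ≤ 1) (hx : ∀ i ∈ s, 0 ≤ x i) :
    Φ (∑ i ∈ s, p i * x i) ≤ ∑ i ∈ s, p i * Φ (x i) := by
  simpa only [smul_eq_mul, mul_zero, zero_add, hΦ.map_zero] using
    hΦ.convexOn.map_add_sum_le hp (sub_add_cancel 1 _) hx (sub_nonneg.2 hs) Set.self_mem_Ici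

theorem ofReal_map_le_tsum (hΦ : IsYoungFunction Φ) {p : α → ℝ≥0} {x : α → ℝ} {t : ℝ}
    (hp : ∑' i, (p i : ℝ≥0∞) ≤ 1) (hx : ∀ i, 0 ≤ x i) (ht : 0 ≤ t)
    (htx : ENNReal.ofReal t ≤ ∑' i, p i * ENNReal.ofReal (x i)) :
    ENNReal.ofReal (Φ t) ≤ ∑' i, p i * ENNReal.ofReal (Φ (x i)) := by
  rcases ht.eq_or_lt with rfl | ht
  · simp only [hΦ.map_zero, ENNReal.ofReal_zero, zero_le]
  have of_lt {r : ℝ} (hr : r ∈ Set.Ioo 0 t) :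
      ENNReal.ofReal (Φ r) ≤ ∑' i, p i * ENNReal.ofReal (Φ (x i)) := by
    have lt_tsum := ((ENNReal.ofReal_lt_ofReal_iff ht).2 hr.2).trans_le htx
    rw [ENNReal.tsum_eq_iSup_sum, lt_iSup_iff] at lt_tsum
    obtain ⟨s, lt_sum⟩ := lt_tsum
    have coe_sum {y : α → ℝ} (hy : ∀ i, 0 ≤ y i) :
        ∑ i ∈ s, (p i : ℝ≥0∞) * ENNReal.ofReal (y i) = ENNReal.ofReal (∑ i ∈ s, p i * y i) := by
      rw [ENNReal.ofReal_sum_of_nonneg fun i _ => mul_nonneg (NNReal.coe_nonneg _) (hy i)]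
      simp only [ENNReal.ofReal_mul (NNReal.coe_nonneg _), ENNReal.ofReal_coe_nnreal]
    rw [coe_sum hx] at lt_sum
    have le_sum : r ≤ ∑ i ∈ s, p i * x i :=
      ((ENNReal.ofReal_lt_ofReal_iff_of_nonneg hr.1.le).1 lt_sum).le
    have sum_le_one : ∑ i ∈ s, (p i : ℝ) ≤ 1 := by
      exact_mod_cast (ENNReal.sum_le_tsum s).trans hp
    calc ENNReal.ofReal (Φ r)
        ≤ ENNReal.ofReal (∑ i ∈ s, p i * Φ (x i)) := ENNReal.ofReal_le_ofReal <|
          (hΦ.monotoneOn hr.1.le (hr.1.le.trans le_sum) le_sum).trans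
            (hΦ.map_sum_mul_le (fun i _ => (p i).2) sum_le_one fun i _ => hx i)
      _ = ∑ i ∈ s, p i * ENNReal.ofReal (Φ (x i)) := (coe_sum fun i => hΦ.nonneg (hx i)).symm
      _ ≤ ∑' i, p i * ENNReal.ofReal (Φ (x i)) := ENNReal.sum_le_tsum s
  have tendsto_ofReal : Tendsto (fun r => ENNReal.ofReal (Φ r)) (nhdsWithin t (Set.Iio t))
      (nhds (ENNReal.ofReal (Φ t))) :=
    (ENNReal.tendsto_ofReal (hΦ.continuousAt ht)).mono_left nhdsWithin_le_nhds
  exact le_of_tendsto tendsto_ofReal <| eventually_of_mem (Ioo_mem_nhdsLT ht) fun _ => of_lt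

theorem tsum_ofReal_map_le_of_subMarkov (hΦ : IsYoungFunction Φ) {p : α → β → ℝ≥0} {u : α → ℝ≥0∞}
    {u' : β → ℝ≥0∞} {x : β → ℝ} {y : α → ℝ} (hrow : ∀ n, ∑' m, (p n m : ℝ≥0∞) ≤ 1)
    (hcol : ∀ m, ∑' n, p n m * u n ≤ u' m) (hx : ∀ m, 0 ≤ x m) (hy : ∀ n, 0 ≤ y n)
    (hyx : ∀ n, ENNReal.ofReal (y n) ≤ ∑' m, p n m * ENNReal.ofReal (x m)) :
    ∑' n, ENNReal.ofReal (Φ (y n)) * u n ≤ ∑' m, ENNReal.ofReal (Φ (x m)) * u' m :=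
  calc ∑' n, ENNReal.ofReal (Φ (y n)) * u n
      ≤ ∑' n, (∑' m, p n m * ENNReal.ofReal (Φ (x m))) * u n :=
        ENNReal.tsum_le_tsum fun n =>
          mul_le_mul_left (hΦ.ofReal_map_le_tsum (hrow n) hx (hy n) (hyx n)) _
    _ = ∑' m, ENNReal.ofReal (Φ (x m)) * ∑' n, p n m * u n := by
        simp only [← ENNReal.tsum_mul_right, ← ENNReal.tsum_mul_left]
        rw [ENNReal.tsum_comm]
        simp only [mul_left_comm, mul_assoc]
    _ ≤ ∑' m, ENNReal.ofReal (Φ (x m)) * u' m :=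
        ENNReal.tsum_le_tsum fun m => mul_le_mul_right (hcol m) _

theorem tsum_ofReal_map_le_of_kernel (hΦ : IsYoungFunction Φ) {K : α → β → ℝ≥0} {T C : ℝ≥0}
    (hT : 0 < T) (hC : 1 ≤ C) (hrow : ∀ n, ∑' m, (K n m : ℝ≥0∞) ≤ T)
    (hcol : ∀ m, ∑' n, (K n m : ℝ≥0∞) ≤ T) {u : α → ℝ≥0∞} {u' : β → ℝ≥0∞}
    (hu : ∀ n m, K n m ≠ 0 → u n ≤ C * u' m) {x : β → ℝ} {y : α → ℝ} (hx : ∀ m, 0 ≤ x m)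
    (hy : ∀ n, 0 ≤ y n)
    (hyx : ∀ n, ENNReal.ofReal (y n) ≤ ∑' m, ((T * C)⁻¹ * K n m : ℝ≥0) * ENNReal.ofReal (x m)) :
    ∑' n, ENNReal.ofReal (Φ (y n)) * u n ≤ ∑' m, ENNReal.ofReal (Φ (x m)) * u' m := by
  have hC0 : 0 < C := zero_lt_one.trans_le hC
  set r : ℝ≥0 := (T * C)⁻¹
  have r_mul : (r * (T * C) : ℝ≥0∞) = 1 := mod_cast inv_mul_cancel₀ (mul_pos hT hC0).ne'
  have r_mul_le : (r * T : ℝ≥0∞) ≤ 1 :=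
    r_mul ▸ mul_le_mul_right (le_mul_of_one_le_right zero_le (mod_cast hC)) _
  have mul_u_le (n : α) (m : β) : (K n m : ℝ≥0∞) * u n ≤ K n m * (C * u' m) := by
    by_cases hK : K n m = 0
    · simp only [hK, ENNReal.coe_zero, zero_mul, le_refl]
    · exact mul_le_mul_right (hu n m hK) _
  refine hΦ.tsum_ofReal_map_le_of_subMarkov (fun n => ?_) (fun m => ?_) hx hy hyx
  · simp only [ENNReal.coe_mul, ENNReal.tsum_mul_left]
    exact (mul_le_mul_right (hrow n) _).trans r_mul_le
  · calc ∑' n, ((r * K n m : ℝ≥0) : ℝ≥0∞) * u n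
        ≤ ∑' n, r * (K n m * (C * u' m)) := by
          simp only [ENNReal.coe_mul, mul_assoc]
          exact ENNReal.tsum_le_tsum fun n => mul_le_mul_right (mul_u_le n m) _
      _ = r * ((∑' n, (K n m : ℝ≥0∞)) * C) * u' m := by
          simp only [ENNReal.tsum_mul_left, ENNReal.tsum_mul_right, mul_assoc]
      _ ≤ r * (T * C) * u' m := by
          gcongr
          exact hcol m
      _ = u' m := by rw [r_mul, one_mul]

end IsYoungFunction

end YoungFunctions

section LuxemburgNorm

open scoped NNReal

variable {Φ : ℝ → ℝ} {v u : ℕ → ℝ} {c d : ℕ → ℂ}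

theorem lux_nonneg : 0 ≤ lux Φ v u c :=
  Real.sInf_nonneg fun _ hx => hx.1.le

theorem lux_le_of_mem {x : ℝ} (hx : x ∈ luxSet Φ v u c) : lux Φ v u c ≤ x :=
  csInf_le ⟨0, fun _ hy => hy.1.le⟩ hx

theorem add_mem_luxSet (hΦ : IsYoungFunction Φ) (hv : ∀ n, 0 ≤ v n) {x y : ℝ}
    (hx : x ∈ luxSet Φ v u c) (hy : y ∈ luxSet Φ v u d) : x + y ∈ luxSet Φ v u (c + d) := by
  obtain ⟨hx0, hx⟩ := hx
  obtain ⟨hy0, hy⟩ := hy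
  refine ⟨add_pos hx0 hy0, ?_⟩
  set s := x / (x + y)
  set t := y / (x + y)
  have s_add_t : s + t = 1 := by rw [← add_div, div_self (add_pos hx0 hy0).ne']
  have hs : 0 ≤ s := by positivity
  have ht : 0 ≤ t := by positivity
  have map_le (n : ℕ) : Φ (‖(c + d) n‖ * v n / (x + y)) ≤
      s * Φ (‖c n‖ * v n / x) + t * Φ (‖d n‖ * v n / y) := by
    have hvn := hv n
    have hcn : 0 ≤ ‖c n‖ * v n / x := by positivity
    have hdn : 0 ≤ ‖d n‖ * v n / y := by positivity
    calc Φ (‖(c + d) n‖ * v n / (x + y))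
        ≤ Φ ((‖c n‖ + ‖d n‖) * v n / (x + y)) := by
          refine hΦ.monotoneOn (by simp only [Set.mem_Ici]; positivity)
            (by simp only [Set.mem_Ici]; positivity) ?_
          gcongr
          exact norm_add_le _ _
      _ = Φ (s • (‖c n‖ * v n / x) + t • (‖d n‖ * v n / y)) := by
          congr 1
          simp only [s, t, smul_eq_mul]
          field_simp
      _ ≤ s * Φ (‖c n‖ * v n / x) + t * Φ (‖d n‖ * v n / y) :=
          hΦ.convexOn.2 hcn hdn hs ht s_add_t
  calc ∑' n, ENNReal.ofReal (Φ (‖(c + d) n‖ * v n / (x + y))) * ENNReal.ofReal (u n)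
      ≤ ∑' n, (ENNReal.ofReal s * (ENNReal.ofReal (Φ (‖c n‖ * v n / x)) * ENNReal.ofReal (u n)) +
          ENNReal.ofReal t * (ENNReal.ofReal (Φ (‖d n‖ * v n / y)) * ENNReal.ofReal (u n))) := by
        refine ENNReal.tsum_le_tsum fun n => ?_
        rw [← mul_assoc, ← mul_assoc, ← add_mul, ← ENNReal.ofReal_mul hs, ← ENNReal.ofReal_mul ht]
        gcongr
        exact (ENNReal.ofReal_le_ofReal (map_le n)).trans ENNReal.ofReal_add_le
    _ ≤ ENNReal.ofReal s * 1 + ENNReal.ofReal t * 1 := by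
        rw [ENNReal.tsum_add, ENNReal.tsum_mul_left, ENNReal.tsum_mul_left]
        gcongr
    _ = 1 := by rw [mul_one, mul_one, ← ENNReal.ofReal_add hs ht, s_add_t, ENNReal.ofReal_one]

theorem mem_luxSet_of_kernel (hΦ : IsYoungFunction Φ) (hv : ∀ n, 0 ≤ v n) {Cv Cu : ℝ}
    (hCv : 0 < Cv) (hCu : 1 ≤ Cu) {K : ℕ → ℕ → ℝ≥0} {T : ℝ≥0} (hT : 0 < T)
    (hrow : ∀ n, ∑' m, (K n m : ℝ≥0∞) ≤ T) (hcol : ∀ m, ∑' n, (K n m : ℝ≥0∞) ≤ T)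
    (hKv : ∀ n m, K n m ≠ 0 → v n ≤ Cv * v m) (hKu : ∀ n m, K n m ≠ 0 → u n ≤ Cu * u m)
    (hd : ∀ n, ‖d n‖ₑ ≤ ∑' m, K n m * ‖c m‖ₑ) {a : ℝ} (ha : a ∈ luxSet Φ v u c) :
    Cv * Cu * (a * T) ∈ luxSet Φ v u d := by
  obtain ⟨ha0, ha⟩ := ha
  lift Cu to ℝ≥0 using zero_le_one.trans hCu
  have hCu0 : 0 < Cu := zero_lt_one.trans_le hCu
  set lam := Cv * Cu * (a * T)
  have lam_pos : 0 < lam := by positivity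
  have mul_v_le (n m : ℕ) :
      K n m * ‖c m‖ * (v n / lam) ≤ ((T * Cu)⁻¹ * K n m : ℝ≥0) * (‖c m‖ * v m / a) := by
    by_cases hK : K n m = 0
    · simp only [hK, NNReal.coe_zero, mul_zero, zero_mul, le_refl]
    calc K n m * ‖c m‖ * (v n / lam) ≤ K n m * ‖c m‖ * (Cv * v m / lam) := by
          gcongr
          exact hKv n m hK
      _ = ((T * Cu)⁻¹ * K n m : ℝ≥0) * (‖c m‖ * v m / a) := by
          push_cast [lam]
          field_simp
  refine ⟨lam_pos, (hΦ.tsum_ofReal_map_le_of_kernel hT hCu hrow hcol (fun n m hK => ?_)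
    (fun m => ?_) (fun n => ?_) fun n => ?_).trans ha⟩
  · rw [← ENNReal.ofReal_coe_nnreal, ← ENNReal.ofReal_mul Cu.coe_nonneg]
    exact ENNReal.ofReal_le_ofReal (hKu n m hK)
  · exact div_nonneg (mul_nonneg (norm_nonneg _) (hv m)) ha0.le
  · exact div_nonneg (mul_nonneg (norm_nonneg _) (hv n)) lam_pos.le
  · calc ENNReal.ofReal (‖d n‖ * v n / lam)
        = ‖d n‖ₑ * ENNReal.ofReal (v n / lam) := by
          rw [mul_div_assoc, ENNReal.ofReal_mul (norm_nonneg _), ofReal_norm]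
      _ ≤ ∑' m, K n m * ‖c m‖ₑ * ENNReal.ofReal (v n / lam) := by
          rw [ENNReal.tsum_mul_right]
          exact mul_le_mul_left (hd n) _
      _ ≤ ∑' m, ((T * Cu)⁻¹ * K n m : ℝ≥0) * ENNReal.ofReal (‖c m‖ * v m / a) := by
          refine ENNReal.tsum_le_tsum fun m => ?_
          rw [← ofReal_norm, ← ENNReal.ofReal_coe_nnreal (p := K n m), ← ENNReal.ofReal_coe_nnreal,
            ← ENNReal.ofReal_mul (by positivity), ← ENNReal.ofReal_mul (by positivity),
            ← ENNReal.ofReal_mul (by positivity)]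
          exact ENNReal.ofReal_le_ofReal (mul_v_le n m)

end LuxemburgNorm

section Convolution

open scoped NNReal

variable {G : Type*} [AddCommGroup G] {a b : G → ℂ}

/-- The convolution of two sequences indexed by an additive group, with the junk value of `tsum`
where the series diverges. -/
noncomputable def seqConv (a b : G → ℂ) (n : G) : ℂ :=
  ∑' j, a j * b (n - j)

theorem summable_norm_mul_sub (ha : Summable fun j => ‖a j‖) (hb : Summable fun j => ‖b j‖)
    (n : G) : Summable fun j => ‖a j * b (n - j)‖ :=
  (ha.mul_norm hb).comp_injective (i := fun j => (j, n - j)) fun _ _ h => congrArg Prod.fst h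

theorem norm_seqConv_le (ha : Summable fun j => ‖a j‖) (hb : Summable fun j => ‖b j‖) (n : G) :
    ‖seqConv a b n‖ ≤ ∑' j, ‖a j‖ * ‖b (n - j)‖ := by
  simpa only [seqConv, norm_mul] using norm_tsum_le_tsum_norm (summable_norm_mul_sub ha hb n)

theorem hasSum_tsum_mul_sub {x y : G → ℝ} (hx : Summable x) (hy : Summable y) (hx0 : ∀ j, 0 ≤ x j)
    (hy0 : ∀ j, 0 ≤ y j) : HasSum (fun n => ∑' j, x j * y (n - j)) ((∑' j, x j) * ∑' j, y j) := by
  let shear : G × G ≃ G × G :=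
    { toFun := fun q => (q.2, q.1 - q.2)
      invFun := fun q => (q.1 + q.2, q.1)
      left_inv := fun q => by simp only [add_sub_cancel, Prod.mk.eta]
      right_inv := fun q => by simp only [add_sub_cancel_left, Prod.mk.eta] }
  have hasSum_mul : HasSum (fun q : G × G => x q.1 * y q.2) ((∑' j, x j) * ∑' j, y j) :=
    hx.hasSum.mul hy.hasSum (hx.mul_of_nonneg hy hx0 hy0)
  have hasSum_shear := shear.hasSum_iff.2 hasSum_mul
  exact hasSum_shear.prod_fiberwise fun n => (hasSum_shear.summable.prod_factor n).hasSum

theorem summable_norm_seqConv (ha : Summable fun j => ‖a j‖) (hb : Summable fun j => ‖b j‖) :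
    Summable fun n => ‖seqConv a b n‖ :=
  .of_nonneg_of_le (fun _ => norm_nonneg _) (norm_seqConv_le ha hb)
    (hasSum_tsum_mul_sub ha hb (fun _ => norm_nonneg _) fun _ => norm_nonneg _).summable

theorem tsum_norm_seqConv_le (ha : Summable fun j => ‖a j‖) (hb : Summable fun j => ‖b j‖) :
    ∑' n, ‖seqConv a b n‖ ≤ (∑' j, ‖a j‖) * ∑' j, ‖b j‖ := by
  have hasSum_conv := hasSum_tsum_mul_sub ha hb (fun _ => norm_nonneg _) fun _ => norm_nonneg _
  rw [← hasSum_conv.tsum_eq]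
  exact (summable_norm_seqConv ha hb).tsum_le_tsum (norm_seqConv_le ha hb) hasSum_conv.summable

/-- The relation `R` halves the partially enumerated group `ι : ℕ → G` if in every decomposition
`ι n = j + (ι n - j)` one of the two terms is of the form `ι m` with `R n m`. The model case is a
half-line of `ℤ`, where `R n m` says that `|ι n| ≤ 2 * |ι m|`. -/
def IsHalving (ι : ℕ → G) (R : ℕ → ℕ → Prop) : Prop :=
  ∀ n j, (∃ m, R n m ∧ ι m = j) ∨ ∃ m, R n m ∧ ι m = ι n - j

/-- The part of the convolution kernel `(n, m) ↦ ‖a (ι n - ι m)‖` carried by the relation `R`. -/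
noncomputable def convKernel (ι : ℕ → G) (R : ℕ → ℕ → Prop) (a : G → ℂ) (n m : ℕ) : ℝ≥0 :=
  Set.indicator {m | R n m} (fun m => ‖a (ι n - ι m)‖₊) m

variable {ι : ℕ → G} {R : ℕ → ℕ → Prop}

theorem rel_of_convKernel_ne_zero {n m : ℕ} (h : convKernel ι R a n m ≠ 0) : R n m :=
  Set.mem_of_indicator_ne_zero h

theorem convKernel_le (n m : ℕ) : (convKernel ι R a n m : ℝ≥0∞) ≤ ‖a (ι n - ι m)‖ₑ :=
  ENNReal.coe_le_coe.2 (Set.indicator_le_self _ (fun m => ‖a (ι n - ι m)‖₊) m)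

theorem tsum_convKernel_row_le (hι : ι.Injective) (n : ℕ) :
    ∑' m, (convKernel ι R a n m : ℝ≥0∞) ≤ ∑' j, ‖a j‖ₑ :=
  (ENNReal.tsum_le_tsum (convKernel_le n)).trans
    (ENNReal.tsum_comp_le_tsum_of_injective (sub_right_injective.comp hι) (fun j => ‖a j‖ₑ))

theorem tsum_convKernel_col_le (hι : ι.Injective) (m : ℕ) :
    ∑' n, (convKernel ι R a n m : ℝ≥0∞) ≤ ∑' j, ‖a j‖ₑ :=
  (ENNReal.tsum_le_tsum fun n => convKernel_le n m).trans
    (ENNReal.tsum_comp_le_tsum_of_injective (sub_left_injective.comp hι) (fun j => ‖a j‖ₑ))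

theorem tsum_image_enorm_mul (hι : ι.Injective) (n : ℕ) :
    ∑' j : ι '' {m | R n m}, ‖a (ι n - j)‖ₑ * ‖b j‖ₑ =
      ∑' m, convKernel ι R a n m * ‖b (ι m)‖ₑ := by
  rw [tsum_image (fun j => ‖a (ι n - j)‖ₑ * ‖b j‖ₑ) hι.injOn,
    tsum_subtype {m | R n m} fun m => ‖a (ι n - ι m)‖ₑ * ‖b (ι m)‖ₑ]
  congr 1 with m
  by_cases h : R n m <;> simp [convKernel, h, enorm_eq_nnnorm]

theorem IsHalving.exists_add_eq_seqConv (hR : IsHalving ι R) (hι : ι.Injective)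
    (ha : Summable fun j => ‖a j‖) (hb : Summable fun j => ‖b j‖) :
    ∃ d₁ d₂ : ℕ → ℂ, (d₁ + d₂ = fun n => seqConv a b (ι n)) ∧
      (∀ n, ‖d₁ n‖ₑ ≤ ∑' m, convKernel ι R b n m * ‖a (ι m)‖ₑ) ∧
      ∀ n, ‖d₂ n‖ₑ ≤ ∑' m, convKernel ι R a n m * ‖b (ι m)‖ₑ := by
  let near (n : ℕ) : Set G := ι '' {m | R n m}
  refine ⟨fun n => ∑' j : near n, a j * b (ι n - j), fun n => ∑' j : ↑(near n)ᶜ, a j * b (ι n - j),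
    funext fun n => ?_, fun n => ?_, fun n => ?_⟩
  · have summable_mul := (summable_norm_mul_sub ha hb (ι n)).of_norm
    exact (summable_mul.subtype _).tsum_add_tsum_compl (summable_mul.subtype _)
  · refine enorm_tsum_le_tsum_enorm.trans_eq ?_
    simp only [enorm_mul, mul_comm ‖a _‖ₑ]
    exact tsum_image_enorm_mul hι n
  · have compl_near_subset : (near n)ᶜ ⊆ Equiv.subLeft (ι n) '' near n := by
      intro j hj
      obtain ⟨m, hm⟩ | ⟨m, hm, hmj⟩ := hR n j
      · exact (hj ⟨m, hm⟩).elim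
      · exact ⟨ι m, ⟨m, hm, rfl⟩, by simp [hmj]⟩
    calc ‖∑' j : ↑(near n)ᶜ, a j * b (ι n - j)‖ₑ
        ≤ ∑' j : ↑(near n)ᶜ, ‖a j‖ₑ * ‖b (ι n - j)‖ₑ := by
          simpa only [enorm_mul] using
            enorm_tsum_le_tsum_enorm (f := fun j : ↑(near n)ᶜ => a j * b (ι n - j))
      _ ≤ ∑' j : Equiv.subLeft (ι n) '' near n, ‖a j‖ₑ * ‖b (ι n - j)‖ₑ :=
          ENNReal.tsum_mono_subtype (fun j => ‖a j‖ₑ * ‖b (ι n - j)‖ₑ) compl_near_subset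
      _ = ∑' j : near n, ‖a (ι n - j)‖ₑ * ‖b j‖ₑ := by
          rw [tsum_image (fun j => ‖a j‖ₑ * ‖b (ι n - j)‖ₑ) (Equiv.injective _).injOn]
          simp only [Equiv.subLeft_apply, sub_sub_cancel]
      _ = ∑' m, convKernel ι R a n m * ‖b (ι m)‖ₑ := tsum_image_enorm_mul hι n

end Convolution

section LuxemburgConvolution

open scoped NNReal

variable {G : Type*} [AddCommGroup G] {a b : G → ℂ} {ι : ℕ → G} {R : ℕ → ℕ → Prop} {Φ : ℝ → ℝ}
  {v u : ℕ → ℝ} {Cv Cu : ℝ}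

theorem mem_luxSet_of_le_convKernel (hι : ι.Injective) (hΦ : IsYoungFunction Φ)
    (hv : ∀ n, 0 ≤ v n) (hCv : 0 < Cv) (hCu : 1 ≤ Cu)
    (hRv : ∀ n m, R n m → v n ≤ Cv * v m) (hRu : ∀ n m, R n m → u n ≤ Cu * u m)
    (ha : Summable fun j => ‖a j‖) {S : ℝ} (hS : ∑' j, ‖a j‖ < S) {c d : ℕ → ℂ}
    (hd : ∀ n, ‖d n‖ₑ ≤ ∑' m, convKernel ι R a n m * ‖c m‖ₑ) {x : ℝ} (hx : x ∈ luxSet Φ v u c) :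
    Cv * Cu * (x * S) ∈ luxSet Φ v u d := by
  have S_pos : 0 < S := (tsum_nonneg fun j => norm_nonneg (a j)).trans_lt hS
  have tsum_le : ∑' j, ‖a j‖ₑ ≤ (S.toNNReal : ℝ≥0∞) := by
    simp only [← ofReal_norm]
    rw [← ENNReal.ofReal_tsum_of_nonneg (fun _ => norm_nonneg _) ha]
    exact ENNReal.ofReal_le_ofReal hS.le
  have mem := mem_luxSet_of_kernel hΦ hv hCv hCu (Real.toNNReal_pos.2 S_pos)
    (fun n => (tsum_convKernel_row_le hι n).trans tsum_le)
    (fun m => (tsum_convKernel_col_le hι m).trans tsum_le)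
    (fun n m h => hRv n m (rel_of_convKernel_ne_zero h))
    (fun n m h => hRu n m (rel_of_convKernel_ne_zero h)) hd hx
  rwa [Real.coe_toNNReal S S_pos.le] at mem

theorem IsHalving.add_mem_luxSet_seqConv (hR : IsHalving ι R) (hι : ι.Injective)
    (hΦ : IsYoungFunction Φ) (hv : ∀ n, 0 ≤ v n) (hCv : 0 < Cv) (hCu : 1 ≤ Cu)
    (hRv : ∀ n m, R n m → v n ≤ Cv * v m) (hRu : ∀ n m, R n m → u n ≤ Cu * u m)
    (ha : Summable fun j => ‖a j‖) (hb : Summable fun j => ‖b j‖) {S T : ℝ}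
    (hS : ∑' j, ‖a j‖ < S) (hT : ∑' j, ‖b j‖ < T) {x y : ℝ}
    (hx : x ∈ luxSet Φ v u fun n => a (ι n)) (hy : y ∈ luxSet Φ v u fun n => b (ι n)) :
    Cv * Cu * (x * T + y * S) ∈ luxSet Φ v u fun n => seqConv a b (ι n) := by
  obtain ⟨d₁, d₂, hd, hd₁, hd₂⟩ := hR.exists_add_eq_seqConv hι ha hb
  rw [← hd, mul_add]
  exact add_mem_luxSet hΦ hv
    (mem_luxSet_of_le_convKernel hι hΦ hv hCv hCu hRv hRu hb hT hd₁ hx)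
    (mem_luxSet_of_le_convKernel hι hΦ hv hCv hCu hRv hRu ha hS hd₂ hy)

theorem IsHalving.luxSet_seqConv_nonempty_and_lux_le (hR : IsHalving ι R) (hι : ι.Injective)
    (hΦ : IsYoungFunction Φ) (hv : ∀ n, 0 ≤ v n) (hCv : 0 < Cv) (hCu : 1 ≤ Cu)
    (hRv : ∀ n m, R n m → v n ≤ Cv * v m) (hRu : ∀ n m, R n m → u n ≤ Cu * u m)
    (ha : Summable fun j => ‖a j‖) (hb : Summable fun j => ‖b j‖)
    (hx : (luxSet Φ v u fun n => a (ι n)).Nonempty)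
    (hy : (luxSet Φ v u fun n => b (ι n)).Nonempty) :
    (luxSet Φ v u fun n => seqConv a b (ι n)).Nonempty ∧
      lux Φ v u (fun n => seqConv a b (ι n)) ≤
        Cv * Cu * (lux Φ v u (fun n => a (ι n)) * ∑' j, ‖b j‖ +
          lux Φ v u (fun n => b (ι n)) * ∑' j, ‖a j‖) := by
  set A := lux Φ v u (fun n => a (ι n))
  set B := lux Φ v u (fun n => b (ι n))
  set S := ∑' j, ‖a j‖
  set T := ∑' j, ‖b j‖
  have bound_mem {ε x y : ℝ} (hε : 0 < ε) := hR.add_mem_luxSet_seqConv (x := x) (y := y) hι hΦ hv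
    hCv hCu hRv hRu ha hb (lt_add_of_pos_right S hε) (lt_add_of_pos_right T hε)
  refine ⟨⟨_, bound_mem one_pos hx.some_mem hy.some_mem⟩, ?_⟩
  let bound (ε : ℝ) : ℝ := Cv * Cu * ((A + ε) * (T + ε) + (B + ε) * (S + ε))
  have le_bound {ε : ℝ} (hε : 0 < ε) : lux Φ v u (fun n => seqConv a b (ι n)) ≤ bound ε := by
    obtain ⟨x, hx, hxA : x < A + ε⟩ := Real.lt_sInf_add_pos hx hε
    obtain ⟨y, hy, hyB : y < B + ε⟩ := Real.lt_sInf_add_pos hy hε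
    refine (lux_le_of_mem (bound_mem hε hx hy)).trans ?_
    dsimp only [bound]
    gcongr
  have tendsto_bound : Tendsto bound (nhdsWithin 0 (Set.Ioi 0)) (nhds (bound 0)) :=
    (by fun_prop : Continuous bound).continuousWithinAt
  calc lux Φ v u (fun n => seqConv a b (ι n))
      ≤ bound 0 :=
        ge_of_tendsto tendsto_bound (eventually_mem_nhdsWithin.mono fun _ => le_bound)
    _ = Cv * Cu * (A * T + B * S) := by simp only [bound, add_zero]

end LuxemburgConvolution

section DoublingWeights

/-- A positive nondecreasing weight on the indices `n ≥ k` satisfying the `Δ₂`-condition with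
constant `C`. The `Δ₂`-condition is only imposed for `n ≥ 1`, also when `k = 0`. -/
structure IsDoublingWeight (k : ℕ) (ν : ℕ → ℝ) (C : ℝ) : Prop where
  pos : ∀ n, k ≤ n → 0 < ν n
  le_succ : ∀ n, k ≤ n → ν n ≤ ν (n + 1)
  two_mul_le : ∀ n, 1 ≤ n → ν (2 * n) ≤ C * ν n

namespace IsDoublingWeight

variable {k : ℕ} {ν : ℕ → ℝ} {C : ℝ}

theorem le_of_le (hν : IsDoublingWeight k ν C) {n m : ℕ} (hn : k ≤ n) (hnm : n ≤ m) : ν n ≤ ν m :=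
  monotoneOn_nat_Ici_of_le_succ hν.le_succ hn (hn.trans hnm) hnm

theorem one_le (hν : IsDoublingWeight k ν C) : 1 ≤ C := by
  have hk : k ≤ k + 1 := k.le_succ
  refine le_of_mul_le_mul_right ?_ (hν.pos (k + 1) hk)
  rw [one_mul]
  exact (hν.le_of_le hk (by lia)).trans (hν.two_mul_le (k + 1) k.succ_pos)

theorem const_pos (hν : IsDoublingWeight k ν C) : 0 < C :=
  zero_lt_one.trans_le hν.one_le

theorem le_mul_of_le_two_mul (hν : IsDoublingWeight k ν C) {n m : ℕ} (hn : k ≤ n)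
    (hm : k ≤ m) (hnm : n ≤ 2 * m) : ν n ≤ C * ν m := by
  obtain rfl | hm0 := m.eq_zero_or_pos
  · rw [Nat.le_zero.1 hnm]
    exact le_mul_of_one_le_left (hν.pos 0 hm).le hν.one_le
  · exact (hν.le_of_le hn hnm).trans (hν.two_mul_le m hm0)

end IsDoublingWeight

theorem isHalving_natCast : IsHalving (fun n : ℕ => (n : ℤ)) fun n m => n ≤ 2 * m := by
  intro n j
  obtain h | h := le_or_gt (n : ℤ) (2 * j)
  · exact .inl ⟨j.toNat, by lia, by lia⟩
  · exact .inr ⟨(n - j).toNat, by lia, by lia⟩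

theorem isHalving_neg_succ :
    IsHalving (fun n : ℕ => -((n : ℤ) + 1)) fun n m => n + 1 ≤ 2 * (m + 1) := by
  intro n j
  obtain h | h := le_or_gt (2 * j) (-((n : ℤ) + 1))
  · exact .inl ⟨(-j - 1).toNat, by lia, by lia⟩
  · exact .inr ⟨(n + j).toNat, by lia, by lia⟩

end DoublingWeights

section WienerOrlicz

variable {Φ Ψ : ℝ → ℝ} {φ w ψ ϱ : ℕ → ℝ} {Cφ Cw Cψ Cϱ : ℝ} {a b : ℤ → ℂ}

theorem luxSet_seqConv_neg_succ_nonempty_and_lux_le (hΦ : IsYoungFunction Φ)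
    (hφ : IsDoublingWeight 1 φ Cφ) (hw : IsDoublingWeight 1 w Cw)
    (haW : Summable fun k => ‖a k‖) (hbW : Summable fun k => ‖b k‖)
    (ha : (luxSet Φ (fun n => φ (n + 1)) (fun n => w (n + 1))
      fun n => a (-((n : ℤ) + 1))).Nonempty)
    (hb : (luxSet Φ (fun n => φ (n + 1)) (fun n => w (n + 1))
      fun n => b (-((n : ℤ) + 1))).Nonempty) :
    (luxSet Φ (fun n => φ (n + 1)) (fun n => w (n + 1))
      fun n => seqConv a b (-((n : ℤ) + 1))).Nonempty ∧
      lux Φ (fun n => φ (n + 1)) (fun n => w (n + 1)) (fun n => seqConv a b (-((n : ℤ) + 1))) ≤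
        Cφ * Cw * (lux Φ (fun n => φ (n + 1)) (fun n => w (n + 1)) (fun n => a (-((n : ℤ) + 1))) *
            ∑' k, ‖b k‖ +
          lux Φ (fun n => φ (n + 1)) (fun n => w (n + 1)) (fun n => b (-((n : ℤ) + 1))) *
            ∑' k, ‖a k‖) :=
  isHalving_neg_succ.luxSet_seqConv_nonempty_and_lux_le (fun _ _ h => by lia) hΦ
    (fun n => (hφ.pos (n + 1) n.succ_pos).le) hφ.const_pos hw.one_le
    (fun n m => hφ.le_mul_of_le_two_mul n.succ_pos m.succ_pos)
    (fun n m => hw.le_mul_of_le_two_mul n.succ_pos m.succ_pos) haW hbW ha hb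

theorem luxSet_seqConv_natCast_nonempty_and_lux_le (hΨ : IsYoungFunction Ψ)
    (hψ : IsDoublingWeight 0 ψ Cψ) (hϱ : IsDoublingWeight 0 ϱ Cϱ)
    (haW : Summable fun k => ‖a k‖) (hbW : Summable fun k => ‖b k‖)
    (ha : (luxSet Ψ ψ ϱ fun n => a n).Nonempty) (hb : (luxSet Ψ ψ ϱ fun n => b n).Nonempty) :
    (luxSet Ψ ψ ϱ fun n => seqConv a b n).Nonempty ∧
      lux Ψ ψ ϱ (fun n => seqConv a b n) ≤
        Cψ * Cϱ * (lux Ψ ψ ϱ (fun n => a n) * ∑' k, ‖b k‖ +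
          lux Ψ ψ ϱ (fun n => b n) * ∑' k, ‖a k‖) :=
  isHalving_natCast.luxSet_seqConv_nonempty_and_lux_le Nat.cast_injective hΨ
    (fun n => (hψ.pos n n.zero_le).le) hψ.const_pos hϱ.one_le
    (fun n m => hψ.le_mul_of_le_two_mul n.zero_le m.zero_le)
    (fun n m => hϱ.le_mul_of_le_two_mul n.zero_le m.zero_le) haW hbW ha hb

/-- Finiteness of the norm `wienerOrliczNorm` of a two-sided sequence: it is absolutely summable and
both of its halves have a finite Luxemburg norm. -/
def MemWienerOrlicz (Φ Ψ : ℝ → ℝ) (φ w ψ ϱ : ℕ → ℝ) (a : ℤ → ℂ) : Prop :=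
  (Summable fun k => ‖a k‖) ∧
    (luxSet Φ (fun n => φ (n + 1)) (fun n => w (n + 1)) fun n => a (-((n : ℤ) + 1))).Nonempty ∧
    (luxSet Ψ ψ ϱ fun n => a n).Nonempty

/-- The norm `‖a‖_W + ‖a‖₋ + ‖a‖₊` of a two-sided sequence: its `ℓ¹` norm plus the Luxemburg norms
of `(a (-n))` for `n ≥ 1` and of `(a n)` for `n ≥ 0`. The weights `φ` and `w` start at `n = 1`,
hence the shift by one. -/
noncomputable def wienerOrliczNorm (Φ Ψ : ℝ → ℝ) (φ w ψ ϱ : ℕ → ℝ) (a : ℤ → ℂ) : ℝ :=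
  (∑' k, ‖a k‖) + lux Φ (fun n => φ (n + 1)) (fun n => w (n + 1)) (fun n => a (-((n : ℤ) + 1))) +
    lux Ψ ψ ϱ fun n => a n

theorem wienerOrliczNorm_nonneg : 0 ≤ wienerOrliczNorm Φ Ψ φ w ψ ϱ a :=
  add_nonneg (add_nonneg (tsum_nonneg fun _ => norm_nonneg _) lux_nonneg) lux_nonneg

theorem memWienerOrlicz_seqConv_and_norm_le (hΦ : IsYoungFunction Φ) (hΨ : IsYoungFunction Ψ)
    (hφ : IsDoublingWeight 1 φ Cφ) (hw : IsDoublingWeight 1 w Cw)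
    (hψ : IsDoublingWeight 0 ψ Cψ) (hϱ : IsDoublingWeight 0 ϱ Cϱ)
    (ha : MemWienerOrlicz Φ Ψ φ w ψ ϱ a) (hb : MemWienerOrlicz Φ Ψ φ w ψ ϱ b) :
    MemWienerOrlicz Φ Ψ φ w ψ ϱ (seqConv a b) ∧
      wienerOrliczNorm Φ Ψ φ w ψ ϱ (seqConv a b) ≤ max (Cφ * Cw) (Cψ * Cϱ) *
        wienerOrliczNorm Φ Ψ φ w ψ ϱ a * wienerOrliczNorm Φ Ψ φ w ψ ϱ b := by
  obtain ⟨haW, haΦ, haΨ⟩ := ha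
  obtain ⟨hbW, hbΦ, hbΨ⟩ := hb
  obtain ⟨memΦ, leΦ⟩ :=
    luxSet_seqConv_neg_succ_nonempty_and_lux_le hΦ hφ hw haW hbW haΦ hbΦ
  obtain ⟨memΨ, leΨ⟩ := luxSet_seqConv_natCast_nonempty_and_lux_le hΨ hψ hϱ haW hbW haΨ hbΨ
  refine ⟨⟨summable_norm_seqConv haW hbW, memΦ, memΨ⟩, ?_⟩
  unfold wienerOrliczNorm
  set S := ∑' k, ‖a k‖
  set T := ∑' k, ‖b k‖
  set A₁ := lux Φ (fun n => φ (n + 1)) (fun n => w (n + 1)) fun n => a (-((n : ℤ) + 1))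
  set B₁ := lux Φ (fun n => φ (n + 1)) (fun n => w (n + 1)) fun n => b (-((n : ℤ) + 1))
  set A₂ := lux Ψ ψ ϱ fun n => a n
  set B₂ := lux Ψ ψ ϱ fun n => b n
  set M := max (Cφ * Cw) (Cψ * Cϱ)
  have hS : 0 ≤ S := tsum_nonneg fun _ => norm_nonneg _
  have hT : 0 ≤ T := tsum_nonneg fun _ => norm_nonneg _
  have hA₁ : 0 ≤ A₁ := lux_nonneg
  have hB₁ : 0 ≤ B₁ := lux_nonneg
  have hA₂ : 0 ≤ A₂ := lux_nonneg
  have hB₂ : 0 ≤ B₂ := lux_nonneg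
  have hM : 1 ≤ M :=
    le_max_of_le_left (one_le_mul_of_one_le_of_one_le hφ.one_le hw.one_le)
  calc _ ≤ S * T + Cφ * Cw * (A₁ * T + B₁ * S) + Cψ * Cϱ * (A₂ * T + B₂ * S) :=
        add_le_add_three (tsum_norm_seqConv_le haW hbW) leΦ leΨ
    _ ≤ M * (S * T) + M * (A₁ * T + B₁ * S) + M * (A₂ * T + B₂ * S) := add_le_add_three
        (le_mul_of_one_le_left (mul_nonneg hS hT) hM)
        (mul_le_mul_of_nonneg_right (le_max_left _ _) (by positivity))
        (mul_le_mul_of_nonneg_right (le_max_right _ _) (by positivity))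
    _ ≤ M * (S * T) + M * (A₁ * T + B₁ * S) + M * (A₂ * T + B₂ * S) +
          M * ((A₁ + A₂) * (B₁ + B₂)) := le_add_of_nonneg_right (by positivity)
    _ = M * (S + A₁ + A₂) * (T + B₁ + B₂) := by ring

theorem stmt_7_general {T : ℝ} [Fact (0 < T)]
    (hΦ : IsYoungFunction Φ) (hΨ : IsYoungFunction Ψ)
    (hφ : IsDoublingWeight 1 φ Cφ) (hw : IsDoublingWeight 1 w Cw)
    (hψ : IsDoublingWeight 0 ψ Cψ) (hϱ : IsDoublingWeight 0 ϱ Cϱ)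
    {f g : AddCircle T → ℂ} (hf : Integrable f AddCircle.haarAddCircle)
    (hg : Integrable g AddCircle.haarAddCircle)
    (hfN : MemWienerOrlicz Φ Ψ φ w ψ ϱ (fourierCoeff f))
    (hgN : MemWienerOrlicz Φ Ψ φ w ψ ϱ (fourierCoeff g)) :
    MemWienerOrlicz Φ Ψ φ w ψ ϱ (fourierCoeff (f * g)) ∧
      wienerOrliczNorm Φ Ψ φ w ψ ϱ (fourierCoeff (f * g)) ≤ max (Cφ * Cw) (Cψ * Cϱ) *
        wienerOrliczNorm Φ Ψ φ w ψ ϱ (fourierCoeff f) *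
        wienerOrliczNorm Φ Ψ φ w ψ ϱ (fourierCoeff g) := by
  have fourierCoeff_mul : fourierCoeff (f * g) = seqConv (fourierCoeff f) (fourierCoeff g) :=
    funext fun n => fourierCoeff_smul_of_summable hf hg hfN.1 n
  rw [fourierCoeff_mul]
  exact memWienerOrlicz_seqConv_and_norm_le hΦ hΨ hφ hw hψ hϱ hfN hgN

end WienerOrlicz

theorem max_mul_le_one_add_two_mul {Cφ Cw Cψ Cϱ : ℝ} (hφ : 0 ≤ Cφ) (hw : 0 ≤ Cw) (hψ : 0 ≤ Cψ)
    (hϱ : 0 ≤ Cϱ) :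
    max (Cφ * Cw) (Cψ * Cϱ) ≤ 1 + 2 * (1 + Cw) * Cφ + 2 * (1 + Cϱ) * Cψ := by
  have hφw : 0 ≤ Cφ * Cw := mul_nonneg hφ hw
  have hψϱ : 0 ≤ Cψ * Cϱ := mul_nonneg hψ hϱ
  exact max_le (by linarith) (by linarith)

/-- Main theorem: for Orlicz functions `Φ, Ψ` and positive nondecreasing
Δ₂-weight sequences `φ, w` (indexed by `n ≥ 1`) and `ψ, ϱ` (indexed by
`n ≥ 0`), the norm `‖f‖ = ‖f‖_W + ‖f‖₋ + ‖f‖₊` on `L¹(𝕋)` (Wiener norm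
plus the Luxemburg norms of the negative and nonnegative Fourier
coefficients) satisfies `‖fg‖ ≤ C ‖f‖ ‖g‖` with
`C = 1 + 2(1+C_w)C_φ + 2(1+C_ϱ)C_ψ` whenever `‖f‖, ‖g‖ < ∞`. -/
theorem stmt_7 (Φ Ψ : ℝ → ℝ)
    (hΦc : Continuous Φ) (hΦm : MonotoneOn Φ (Set.Ici 0))
    (hΦconv : ConvexOn ℝ (Set.Ici 0) Φ) (hΦ0 : Φ 0 = 0)
    (hΦtop : Tendsto Φ atTop atTop)
    (hΨc : Continuous Ψ) (hΨm : MonotoneOn Ψ (Set.Ici 0))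
    (hΨconv : ConvexOn ℝ (Set.Ici 0) Ψ) (hΨ0 : Ψ 0 = 0)
    (hΨtop : Tendsto Ψ atTop atTop)
    (φ w : ℕ → ℝ) (Cφ Cw : ℝ)
    (hφpos : ∀ n, 1 ≤ n → 0 < φ n) (hφmono : ∀ n, 1 ≤ n → φ n ≤ φ (n + 1))
    (hφΔ₂ : ∀ n, 1 ≤ n → φ (2 * n) ≤ Cφ * φ n)
    (hwpos : ∀ n, 1 ≤ n → 0 < w n) (hwmono : ∀ n, 1 ≤ n → w n ≤ w (n + 1))
    (hwΔ₂ : ∀ n, 1 ≤ n → w (2 * n) ≤ Cw * w n)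
    (ψ ϱ : ℕ → ℝ) (Cψ Cϱ : ℝ)
    (hψpos : ∀ n, 0 < ψ n) (hψmono : ∀ n, ψ n ≤ ψ (n + 1))
    (hψΔ₂ : ∀ n, 1 ≤ n → ψ (2 * n) ≤ Cψ * ψ n)
    (hϱpos : ∀ n, 0 < ϱ n) (hϱmono : ∀ n, ϱ n ≤ ϱ (n + 1))
    (hϱΔ₂ : ∀ n, 1 ≤ n → ϱ (2 * n) ≤ Cϱ * ϱ n)
    (f g : AddCircle (2 * Real.pi) → ℂ)
    (hf : Integrable f AddCircle.haarAddCircle)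
    (hg : Integrable g AddCircle.haarAddCircle)
    -- `‖f‖ < ∞` :
    (hfW : Summable fun k : ℤ => ‖fourierCoeff f k‖)
    (hfm : (luxSet Φ (fun n => φ (n + 1)) (fun n => w (n + 1))
        (fun n => fourierCoeff f (-((n : ℤ) + 1)))).Nonempty)
    (hfp : (luxSet Ψ ψ ϱ (fun n => fourierCoeff f (n : ℤ))).Nonempty)
    -- `‖g‖ < ∞` :
    (hgW : Summable fun k : ℤ => ‖fourierCoeff g k‖)
    (hgm : (luxSet Φ (fun n => φ (n + 1)) (fun n => w (n + 1))
        (fun n => fourierCoeff g (-((n : ℤ) + 1)))).Nonempty)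
    (hgp : (luxSet Ψ ψ ϱ (fun n => fourierCoeff g (n : ℤ))).Nonempty) :
    -- `‖fg‖ < ∞` and `‖fg‖ ≤ C ‖f‖ ‖g‖` :
    (Summable fun k : ℤ => ‖fourierCoeff (f * g) k‖) ∧
    (luxSet Φ (fun n => φ (n + 1)) (fun n => w (n + 1))
        (fun n => fourierCoeff (f * g) (-((n : ℤ) + 1)))).Nonempty ∧
    (luxSet Ψ ψ ϱ (fun n => fourierCoeff (f * g) (n : ℤ))).Nonempty ∧
    (∑' k : ℤ, ‖fourierCoeff (f * g) k‖) +
      lux Φ (fun n => φ (n + 1)) (fun n => w (n + 1))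
        (fun n => fourierCoeff (f * g) (-((n : ℤ) + 1))) +
      lux Ψ ψ ϱ (fun n => fourierCoeff (f * g) (n : ℤ))
      ≤ (1 + 2 * (1 + Cw) * Cφ + 2 * (1 + Cϱ) * Cψ) *
        ((∑' k : ℤ, ‖fourierCoeff f k‖) +
          lux Φ (fun n => φ (n + 1)) (fun n => w (n + 1))
            (fun n => fourierCoeff f (-((n : ℤ) + 1))) +
          lux Ψ ψ ϱ (fun n => fourierCoeff f (n : ℤ))) *
        ((∑' k : ℤ, ‖fourierCoeff g k‖) +
          lux Φ (fun n => φ (n + 1)) (fun n => w (n + 1))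
            (fun n => fourierCoeff g (-((n : ℤ) + 1))) +
          lux Ψ ψ ϱ (fun n => fourierCoeff g (n : ℤ))) := by
  have hΦ : IsYoungFunction Φ := ⟨hΦm, hΦconv, hΦ0⟩
  have hΨ : IsYoungFunction Ψ := ⟨hΨm, hΨconv, hΨ0⟩
  have hφ : IsDoublingWeight 1 φ Cφ := ⟨hφpos, hφmono, hφΔ₂⟩
  have hw : IsDoublingWeight 1 w Cw := ⟨hwpos, hwmono, hwΔ₂⟩
  have hψ : IsDoublingWeight 0 ψ Cψ := ⟨fun n _ => hψpos n, fun n _ => hψmono n, hψΔ₂⟩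
  have hϱ : IsDoublingWeight 0 ϱ Cϱ := ⟨fun n _ => hϱpos n, fun n _ => hϱmono n, hϱΔ₂⟩
  obtain ⟨⟨hW, hm, hp⟩, hle⟩ :=
    stmt_7_general hΦ hΨ hφ hw hψ hϱ hf hg ⟨hfW, hfm, hfp⟩ ⟨hgW, hgm, hgp⟩
  refine ⟨hW, hm, hp, hle.trans ?_⟩
  exact mul_le_mul_of_nonneg_right (mul_le_mul_of_nonneg_right
    (max_mul_le_one_add_two_mul hφ.const_pos.le hw.const_pos.le hψ.const_pos.le hϱ.const_pos.le)
    wienerOrliczNorm_nonneg) wienerOrliczNorm_nonneg
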